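/- (Linear Feasibility Test.) For k = 1,…,n let Λ_k = {1,…,m_k} and S_k = {1,…,v_k} (finite sets with the discrete sigma-algebra), let Φ ⊆ Λ₁ × ⋯ × Λₙ be nonempty, and for each φ ∈ Φ let p_φ : S₁ × ⋯ × Sₙ → ℝ be nonnegative with Σ_a p_φ(a) = 1, defining the probability measure μ_φ on S₁ × ⋯ × Sₙ with μ_φ({a}) = p_φ(a). Then (μ_φ)_{φ∈Φ} satisfies selective influences if and only if there exists a function Q : ∏_{k=1}^n (Λ_k → S_k) → ℝ with Q(h) ≥ 0 for every h and such that for every φ = (λ₁,…,λₙ) ∈ Φ and every a = (a₁,…,aₙ) ∈ S₁ × ⋯ × Sₙ, the sum of Q(h) over all h = (h₁,…,hₙ) with h_k(λ_k) = a_k for every k equals p_φ(a). -/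

import Mathlib

open MeasureTheory

/-!
A family of outputs `f k (λ k)` on a sample space `Ω` factors through the map sending `ω` to the
tuple of functions `h k = (f k · ω)`. Hence selective influences can always be realized on the
canonical sample space `∏ₖ (Λ k → S k)`, the outputs being the evaluation maps. When this space is
finite, a measure on it is a nonnegative weight vector `Q`, and prescribing its images
under the evaluation maps is a system of linear equations in `Q`. That `Q` has total mass one is
not a further constraint, since a measure has the same mass as its image at any one treatment.
-/

section FiniteMeasures

variable {α β : Type*} [MeasurableSpace α] [MeasurableSpace β] [MeasurableSingletonClass α]

theorem exists_isFiniteMeasure_real_singleton_eq [Finite α] {Q : α → ℝ} (hQ : ∀ a, 0 ≤ Q a) :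
    ∃ P : Measure α, IsFiniteMeasure P ∧ ∀ a, P.real {a} = Q a := by
  refine ⟨Measure.count.withDensity fun a => ENNReal.ofReal (Q a),
    isFiniteMeasure_withDensity_ofReal Integrable.of_finite.hasFiniteIntegral, fun a => ?_⟩
  simp [measureReal_def, hQ a]

theorem isProbabilityMeasure_of_singleton_eq_ofReal [Fintype α] {μ : Measure α} {p : α → ℝ}
    (hp0 : ∀ a, 0 ≤ p a) (hp1 : ∑ a, p a = 1) (hμ : ∀ a, μ {a} = ENNReal.ofReal (p a)) :
    IsProbabilityMeasure μ where
  measure_univ :=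
    calc μ Set.univ = ∑ a, ENNReal.ofReal (p a) := by
          simp only [← hμ, sum_measure_singleton, Finset.coe_univ]
      _ = ENNReal.ofReal (∑ a, p a) := (ENNReal.ofReal_sum_of_nonneg fun a _ => hp0 a).symm
      _ = 1 := by rw [hp1, ENNReal.ofReal_one]

theorem map_eq_iff_forall_sum_real_singleton_eq [Fintype α] [Countable β]
    [MeasurableSingletonClass β] [DecidableEq β] {g : α → β} {P : Measure α} [IsFiniteMeasure P]
    {ν : Measure β} [SigmaFinite ν] :
    P.map g = ν ↔ ∀ b, ∑ a with g a = b, P.real {a} = ν.real {b} := by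
  have sum_fiber (b : β) : ∑ a with g a = b, P.real {a} = (P.map g).real {b} := by
    rw [sum_measureReal_singleton,
      map_measureReal_apply (measurable_of_countable g) (measurableSet_singleton b)]
    congr 1
    ext a
    simp
  simp only [sum_fiber, ext_iff_measureReal_singleton]

end FiniteMeasures

section SelectiveInfluences

universe t u v w

variable {ι : Type u} {Λ : ι → Type v} {S : ι → Type w}

/-- The joint output at treatment `φ` when `h k` is the response of the `k`-th output to its own
input; this is the evaluation map on the reduced coupling space `∏ₖ (Λ k → S k)`. -/
def jointOutput (φ : ∀ k, Λ k) (h : ∀ k, Λ k → S k) : ∀ k, S k :=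
  fun k => h k (φ k)

variable [∀ k, MeasurableSpace (S k)]

/-- Selective influences: on a common probability space, the `k`-th output is a random variable
depending only on the value of the `k`-th input, and the joint outputs have the law `μ φ` at every
allowable treatment `φ ∈ Φ`. The values of `μ` outside `Φ` are irrelevant. -/
def SelectiveInfluences (Φ : Set (∀ k, Λ k)) (μ : (∀ k, Λ k) → Measure (∀ k, S k)) : Prop :=
  ∃ (Ω : Type t) (_ : MeasurableSpace Ω) (P : Measure Ω),
    IsProbabilityMeasure P ∧
    ∃ f : ∀ k, Λ k → Ω → S k,
      (∀ k lam, Measurable (f k lam)) ∧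
      ∀ φ ∈ Φ, Measure.map (fun ω k => f k (φ k) ω) P = μ φ

/-- A reduced coupling: a joint law of one random variable per value of each input, from which
the law `μ φ` of the outputs at every allowable treatment `φ ∈ Φ` is recovered as a marginal. -/
structure IsReducedCoupling (Φ : Set (∀ k, Λ k)) (μ : (∀ k, Λ k) → Measure (∀ k, S k))
    (P : Measure (∀ k, Λ k → S k)) : Prop where
  isProbabilityMeasure : IsProbabilityMeasure P
  map_jointOutput : ∀ φ ∈ Φ, P.map (jointOutput φ) = μ φ

variable {Φ : Set (∀ k, Λ k)} {μ : (∀ k, Λ k) → Measure (∀ k, S k)}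

theorem measurable_jointOutput (φ : ∀ k, Λ k) :
    Measurable (jointOutput φ : (∀ k, Λ k → S k) → ∀ k, S k) := by
  unfold jointOutput
  fun_prop

theorem SelectiveInfluences.exists_isReducedCoupling (h : SelectiveInfluences Φ μ) :
    ∃ P, IsReducedCoupling Φ μ P := by
  obtain ⟨Ω, _, P, _, f, hf, hmap⟩ := h
  let responses (ω : Ω) : ∀ k, Λ k → S k := fun k lam => f k lam ω
  have measurable_responses : Measurable responses :=
    measurable_pi_lambda _ fun k => measurable_pi_lambda _ fun lam => hf k lam
  refine ⟨P.map responses,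
    Measure.isProbabilityMeasure_map measurable_responses.aemeasurable, fun φ hφ => ?_⟩
  rw [Measure.map_map (measurable_jointOutput φ) measurable_responses]
  exact hmap φ hφ

theorem IsReducedCoupling.selectiveInfluences {P : Measure (∀ k, Λ k → S k)}
    (hP : IsReducedCoupling Φ μ P) : SelectiveInfluences.{max u v w, u, v, w} Φ μ :=
  ⟨∀ k, Λ k → S k, inferInstance, P, hP.isProbabilityMeasure, fun k lam h => h k lam,
    fun k lam => by fun_prop, hP.map_jointOutput⟩

section Finite

variable [Fintype ι] [DecidableEq ι] [∀ k, Fintype (Λ k)] [∀ k, DecidableEq (Λ k)]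
  [∀ k, Fintype (S k)] [∀ k, DecidableEq (S k)] [∀ k, MeasurableSingletonClass (S k)]

theorem exists_isReducedCoupling_iff_linear_feasibility (hΦ : Φ.Nonempty)
    (hμ : ∀ φ ∈ Φ, IsProbabilityMeasure (μ φ)) :
    (∃ P, IsReducedCoupling Φ μ P) ↔
      ∃ Q : (∀ k, Λ k → S k) → ℝ, (∀ h, 0 ≤ Q h) ∧
        ∀ φ ∈ Φ, ∀ a, ∑ h with jointOutput φ h = a, Q h = (μ φ).real {a} := by
  constructor
  · rintro ⟨P, hP⟩
    have := hP.isProbabilityMeasure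
    refine ⟨fun h => P.real {h}, fun h => measureReal_nonneg, fun φ hφ => ?_⟩
    have := hμ φ hφ
    exact map_eq_iff_forall_sum_real_singleton_eq.mp (hP.map_jointOutput φ hφ)
  · rintro ⟨Q, hQ0, hQ⟩
    obtain ⟨P, _, hPQ⟩ := exists_isFiniteMeasure_real_singleton_eq hQ0
    have map_eq : ∀ φ ∈ Φ, P.map (jointOutput φ) = μ φ := fun φ hφ => by
      have := hμ φ hφ
      simpa only [map_eq_iff_forall_sum_real_singleton_eq, hPQ] using hQ φ hφ
    obtain ⟨φ, hφ⟩ := hΦ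
    have : IsProbabilityMeasure (P.map (jointOutput φ)) := map_eq φ hφ ▸ hμ φ hφ
    exact ⟨P, Measure.isProbabilityMeasure_of_map (jointOutput φ), map_eq⟩

theorem selective_influences_iff_linear_feasibility_general (hΦ : Φ.Nonempty)
    {p : (∀ k, Λ k) → (∀ k, S k) → ℝ} (hp0 : ∀ φ ∈ Φ, ∀ a, 0 ≤ p φ a)
    (hp1 : ∀ φ ∈ Φ, ∑ a, p φ a = 1)
    (hμ : ∀ φ ∈ Φ, ∀ a, μ φ {a} = ENNReal.ofReal (p φ a)) :
    SelectiveInfluences.{max u v w, u, v, w} Φ μ ↔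
      ∃ Q : (∀ k, Λ k → S k) → ℝ, (∀ h, 0 ≤ Q h) ∧
        ∀ φ ∈ Φ, ∀ a, ∑ h with ∀ k, h k (φ k) = a k, Q h = p φ a := by
  have hμ_prob (φ) (hφ : φ ∈ Φ) : IsProbabilityMeasure (μ φ) :=
    isProbabilityMeasure_of_singleton_eq_ofReal (hp0 φ hφ) (hp1 φ hφ) (hμ φ hφ)
  have hμ_real (φ) (hφ : φ ∈ Φ) (a) : (μ φ).real {a} = p φ a := by
    rw [measureReal_def, hμ φ hφ, ENNReal.toReal_ofReal (hp0 φ hφ a)]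
  calc SelectiveInfluences.{max u v w, u, v, w} Φ μ
    _ ↔ ∃ P, IsReducedCoupling Φ μ P :=
        ⟨fun h => h.exists_isReducedCoupling, fun ⟨_, hP⟩ => hP.selectiveInfluences⟩
    _ ↔ _ := exists_isReducedCoupling_iff_linear_feasibility hΦ hμ_prob
    _ ↔ _ := by simp +contextual only [jointOutput, funext_iff, hμ_real]

end Finite

end SelectiveInfluences

open scoped Classical in
/-- Linear Feasibility Test. With inputs `λ_k ∈ Fin (m k)` and
outputs valued in the finite sets `Fin (v k)` (discrete sigma-algebras), and with the
joint output distribution at treatment `φ ∈ Φ` given by the probability mass function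
`p φ`, the family satisfies selective influences if and only if there is a nonnegative
solution `Q` (a probability mass on the reduced coupling space, one coordinate per each
value of each input) to the linear system: for every allowable treatment
`φ = (λ₁,…,λₙ)` and every output vector `a`, the sum of `Q h` over all `h` with
`h k (λ_k) = a k` for every `k` equals `p φ a`. -/
theorem selective_influences_iff_linear_feasibility
    {n : ℕ} (m v : Fin n → ℕ) (hm : ∀ k, 1 ≤ m k) (hv : ∀ k, 1 ≤ v k)
    (Φ : Set (∀ k, Fin (m k))) (hΦ : Φ.Nonempty)
    (p : (∀ k, Fin (m k)) → (∀ k, Fin (v k)) → ℝ)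
    (hp0 : ∀ φ ∈ Φ, ∀ a, 0 ≤ p φ a)
    (hp1 : ∀ φ ∈ Φ, ∑ a : ∀ k, Fin (v k), p φ a = 1)
    (μ : (∀ k, Fin (m k)) → Measure (∀ k, Fin (v k)))
    (hμ : ∀ φ ∈ Φ, ∀ a : ∀ k, Fin (v k), μ φ {a} = ENNReal.ofReal (p φ a)) :
    (∃ (Ω : Type) (_ : MeasurableSpace Ω) (P : Measure Ω),
      IsProbabilityMeasure P ∧
      ∃ f : ∀ k, Fin (m k) → Ω → Fin (v k),
        (∀ k lam, Measurable (f k lam)) ∧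
        ∀ φ ∈ Φ, Measure.map (fun ω k => f k (φ k) ω) P = μ φ)
    ↔
    (∃ Q : (∀ k, Fin (m k) → Fin (v k)) → ℝ,
      (∀ h, 0 ≤ Q h) ∧
      ∀ φ ∈ Φ, ∀ a : ∀ k, Fin (v k),
        (∑ h ∈ Finset.univ.filter
            (fun h : ∀ k, Fin (m k) → Fin (v k) => ∀ k, h k (φ k) = a k), Q h)
          = p φ a) := by
  rw [← SelectiveInfluences]
  convert selective_influences_iff_linear_feasibility_general hΦ hp0 hp1 hμ
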